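/- Let Γ be a strongly connected digraph on vertices {1,…,n}, with total sandpile group S = S(Γ) and sandpile groups at the vertices S_i = S_i(Γ). Then there exist elements γ_1 ∈ S_1, …, γ_n ∈ S_n such that S_i / ⟨γ_i⟩ ≅ S for every i ∈ {1,…,n}, and gcd(ord(γ_1), …, ord(γ_n)) = 1, where ⟨γ_i⟩ is the cyclic subgroup generated by γ_i and ord(γ_i) is its order. -/

import Mathlib

open Matrix

noncomputable section

/-- The Laplacian of the digraph on `Fin n` with edge multiplicities `d i j ∈ ℕ`:
`L i j = -d i j` for `i ≠ j` and `L i i = outdeg i - d i i = ∑_{k ≠ i} d i k`. -/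
def digraphLaplacian {n : ℕ} (d : Fin n → Fin n → ℕ) : Matrix (Fin n) (Fin n) ℤ :=
  Matrix.of fun i j => if i = j then ∑ k ∈ Finset.univ.erase i, (d i k : ℤ) else -(d i j : ℤ)

/-- `ℤ₀ⁿ`: the submodule of `ℤⁿ` of vectors whose coordinates sum to zero. -/
def zeroSum (n : ℕ) : Submodule ℤ (Fin n → ℤ) where
  carrier := {v | ∑ i, v i = 0}
  add_mem' := by
    intro x y hx hy
    simp only [Set.mem_setOf_eq, Pi.add_apply, Finset.sum_add_distrib] at *
    rw [hx, hy, add_zero]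
  zero_mem' := by simp
  smul_mem' := by
    intro c x hx
    simp only [Set.mem_setOf_eq, Pi.smul_apply, smul_eq_mul, ← Finset.mul_sum] at *
    rw [hx, mul_zero]

/-- The total sandpile group `S(Γ) = ℤ₀ⁿ / L(Γ)ℤⁿ`, where the Laplacian acts on row
vectors (so that its image lies in `ℤ₀ⁿ`). -/
abbrev totalSandpile {n : ℕ} (d : Fin n → Fin n → ℕ) : Type :=
  zeroSum n ⧸ Submodule.comap (zeroSum n).subtype
    (LinearMap.range (Matrix.mulVecLin (digraphLaplacian d)ᵀ))

/-- The sandpile group at the vertex `i`: `S_i(Γ) = ℤ^{n-1} / L_i ℤ^{n-1}`, where `L_i` is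
the Laplacian with the `i`-th row and column removed. -/
abbrev vertexSandpile {n : ℕ} (d : Fin (n + 1) → Fin (n + 1) → ℕ) (i : Fin (n + 1)) : Type :=
  (Fin n → ℤ) ⧸ LinearMap.range
    (Matrix.mulVecLin ((digraphLaplacian d).submatrix i.succAbove i.succAbove)ᵀ)

/-- A digraph with edge multiplicities `d` is strongly connected if any vertex can be
reached from any other through edges of positive multiplicity. -/
def StronglyConnected {n : ℕ} (d : Fin n → Fin n → ℕ) : Prop :=
  ∀ i j : Fin n, Relation.ReflTransGen (fun u v => 0 < d u v) i j

theorem digraphLaplacian_mulVec_one {n : ℕ} (d : Fin n → Fin n → ℕ) :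
    digraphLaplacian d *ᵥ 1 = 0 := by
  ext i
  simp only [mulVec, dotProduct, Pi.one_apply, mul_one, Pi.zero_apply]
  rw [← Finset.add_sum_erase _ _ (Finset.mem_univ i)]
  have h : ∑ j ∈ Finset.univ.erase i, digraphLaplacian d i j
      = ∑ j ∈ Finset.univ.erase i, -(d i j : ℤ) :=
    Finset.sum_congr rfl fun j hj => by
      simp [digraphLaplacian, (Finset.ne_of_mem_erase hj).symm]
  rw [h]
  simp [digraphLaplacian]

theorem transpose_digraphLaplacian_mulVec_mem_zeroSum {n : ℕ} (d : Fin n → Fin n → ℕ)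
    (x : Fin n → ℤ) : (digraphLaplacian d)ᵀ *ᵥ x ∈ zeroSum n := by
  change ∑ i, ((digraphLaplacian d)ᵀ *ᵥ x) i = 0
  rw [← dotProduct_one, mulVec_transpose, ← dotProduct_mulVec, digraphLaplacian_mulVec_one,
    dotProduct_zero]

theorem eq_of_mem_zeroSum {n : ℕ} {v w : Fin (n + 1) → ℤ} (hv : v ∈ zeroSum (n + 1))
    (hw : w ∈ zeroSum (n + 1)) (i : Fin (n + 1))
    (h : ∀ j, v (i.succAbove j) = w (i.succAbove j)) : v = w := by
  replace hv : ∑ j, v j = 0 := hv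
  replace hw : ∑ j, w j = 0 := hw
  rw [Fin.sum_univ_succAbove _ i] at hv hw
  simp only [h] at hv
  ext j
  induction j using Fin.succAboveCases i with
  | x => linarith
  | p j => exact h j

/-- The class in `S_i` of the `i`-th row of the Laplacian with its `i`-th entry removed. -/
def rowClass {n : ℕ} (d : Fin (n + 1) → Fin (n + 1) → ℕ) (i : Fin (n + 1)) :
    vertexSandpile d i :=
  Submodule.Quotient.mk fun j => digraphLaplacian d i (i.succAbove j)

theorem transpose_mulVec_succAbove {n : ℕ} (A : Matrix (Fin (n + 1)) (Fin (n + 1)) ℤ)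
    (i : Fin (n + 1)) (x : Fin (n + 1) → ℤ) :
    (fun j => (Aᵀ *ᵥ x) (i.succAbove j)) =
      x i • (fun j => A i (i.succAbove j)) +
        (A.submatrix i.succAbove i.succAbove)ᵀ *ᵥ (fun j => x (i.succAbove j)) := by
  ext j
  simp [mulVec, dotProduct, Fin.sum_univ_succAbove _ i, mul_comm]

/-- The class of a zero-sum vector `v` in `S_i` is a multiple of `rowClass d i` exactly when `v`
lies in the image of the Laplacian. -/
theorem mk_mem_zmultiples_rowClass_iff {n : ℕ} (d : Fin (n + 1) → Fin (n + 1) → ℕ)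
    (i : Fin (n + 1)) {v : Fin (n + 1) → ℤ} (hv : v ∈ zeroSum (n + 1)) :
    (Submodule.Quotient.mk fun j => v (i.succAbove j) : vertexSandpile d i) ∈
        AddSubgroup.zmultiples (rowClass d i) ↔
      v ∈ LinearMap.range (Matrix.mulVecLin (digraphLaplacian d)ᵀ) := by
  rw [AddSubgroup.mem_zmultiples_iff]
  constructor
  · rintro ⟨k, hk⟩
    rw [rowClass, ← Submodule.Quotient.mk_smul, eq_comm, Submodule.Quotient.eq] at hk
    obtain ⟨y, hy⟩ := hk
    refine ⟨i.insertNth k y, eq_of_mem_zeroSum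
      (transpose_digraphLaplacian_mulVec_mem_zeroSum d _) hv i fun j => ?_⟩
    have h := transpose_mulVec_succAbove (digraphLaplacian d) i (i.insertNth k y)
    simp only [Fin.insertNth_apply_same, Fin.insertNth_apply_succAbove] at h
    rw [mulVecLin_apply] at hy
    rw [hy, add_sub_cancel] at h
    exact congrFun h j
  · rintro ⟨x, rfl⟩
    refine ⟨x i, ?_⟩
    rw [rowClass, ← Submodule.Quotient.mk_smul, eq_comm, Submodule.Quotient.eq]
    refine ⟨fun j => x (i.succAbove j), ?_⟩
    simp only [mulVecLin_apply]
    rw [transpose_mulVec_succAbove, add_sub_cancel_left]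

/-- The quotient of `S_i` by the subgroup generated by `rowClass d i` is the total sandpile
group. -/
theorem nonempty_quotient_rowClass_addEquiv {n : ℕ} (d : Fin (n + 1) → Fin (n + 1) → ℕ)
    (i : Fin (n + 1)) :
    Nonempty ((vertexSandpile d i ⧸ AddSubgroup.zmultiples (rowClass d i)) ≃+
      totalSandpile d) := by
  let f : zeroSum (n + 1) →+ vertexSandpile d i ⧸ AddSubgroup.zmultiples (rowClass d i) :=
    (QuotientAddGroup.mk' _).comp
      ((Submodule.mkQ _).comp
        ((LinearMap.funLeft ℤ ℤ i.succAbove).comp (zeroSum (n + 1)).subtype)).toAddMonoidHom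
  have hf : Function.Surjective f.toIntLinearMap := by
    intro q
    obtain ⟨q, rfl⟩ := QuotientAddGroup.mk_surjective q
    obtain ⟨w, rfl⟩ := Submodule.Quotient.mk_surjective _ q
    refine ⟨⟨i.insertNth (-∑ j, w j) w, ?_⟩, ?_⟩
    · change ∑ j, (i.insertNth (-∑ j, w j) w : Fin (n + 1) → ℤ) j = 0
      simp [Fin.sum_univ_succAbove _ i]
    · change ((Submodule.Quotient.mk fun j =>
        (i.insertNth (-∑ j, w j) w : Fin (n + 1) → ℤ) (i.succAbove j) :
          vertexSandpile d i) : _ ⧸ AddSubgroup.zmultiples (rowClass d i)) = _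
      simp only [Fin.insertNth_apply_succAbove]
  have hker : LinearMap.ker f.toIntLinearMap = Submodule.comap (zeroSum (n + 1)).subtype
      (LinearMap.range (Matrix.mulVecLin (digraphLaplacian d)ᵀ)) := by
    ext v
    exact (QuotientAddGroup.eq_zero_iff _).trans (mk_mem_zmultiples_rowClass_iff d i v.2)
  exact ⟨((Submodule.quotEquivOfEq _ _ hker).symm.trans
    (f.toIntLinearMap.quotKerEquivOfSurjective hf)).symm.toAddEquiv⟩

theorem smul_rowClass_eq_zero {n : ℕ} (d : Fin (n + 1) → Fin (n + 1) → ℕ)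
    {x : Fin (n + 1) → ℤ} (hx : (digraphLaplacian d)ᵀ *ᵥ x = 0) (i : Fin (n + 1)) :
    x i • rowClass d i = 0 := by
  have h := transpose_mulVec_succAbove (digraphLaplacian d) i x
  rw [hx] at h
  rw [rowClass, ← Submodule.Quotient.mk_smul, Submodule.Quotient.mk_eq_zero,
    eq_neg_of_add_eq_zero_left h.symm]
  exact neg_mem ⟨_, rfl⟩

theorem exists_gcd_eq_one_and_mulVec_eq_zero {n : ℕ} (d : Fin (n + 1) → Fin (n + 1) → ℕ) :
    ∃ x : Fin (n + 1) → ℤ, Finset.univ.gcd x = 1 ∧ (digraphLaplacian d)ᵀ *ᵥ x = 0 := by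
  have hdet : (digraphLaplacian d)ᵀ.det = 0 := by
    rw [det_transpose]
    exact exists_mulVec_eq_zero_iff.mp ⟨1, one_ne_zero, digraphLaplacian_mulVec_one d⟩
  obtain ⟨y, hy, hLy⟩ := exists_mulVec_eq_zero_iff.mpr hdet
  obtain ⟨x, hx, hgcd⟩ := Finset.extract_gcd y Finset.univ_nonempty
  refine ⟨x, hgcd, ?_⟩
  have hyx : y = Finset.univ.gcd y • x := funext fun i => hx i (Finset.mem_univ i)
  have hg : Finset.univ.gcd y ≠ 0 := fun h => hy (by rw [hyx, h, zero_smul])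
  rw [hyx, mulVec_smul] at hLy
  exact (smul_eq_zero.mp hLy).resolve_left hg

/-- Farrell–Levine: for a strongly connected digraph, there are elements `γ_i ∈ S_i` such
that `S_i / ⟨γ_i⟩ ≅ S` for all `i` and `gcd_i ord(γ_i) = 1`. -/
theorem exists_gamma_quotient_iso_total {n : ℕ}
    (d : Fin (n + 1) → Fin (n + 1) → ℕ) (hconn : StronglyConnected d) :
    ∃ γ : ∀ i : Fin (n + 1), vertexSandpile d i,
      (∀ i, Nonempty
        ((vertexSandpile d i ⧸ AddSubgroup.zmultiples (γ i)) ≃+ totalSandpile d)) ∧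
      Finset.univ.gcd (fun i : Fin (n + 1) => addOrderOf (γ i)) = 1 := by
  obtain ⟨x, hgcd, hx⟩ := exists_gcd_eq_one_and_mulVec_eq_zero d
  refine ⟨rowClass d, nonempty_quotient_rowClass_addEquiv d, Nat.dvd_one.mp ?_⟩
  rw [← Int.natCast_dvd_natCast, Nat.cast_one, ← hgcd]
  refine Finset.dvd_gcd fun i hi => dvd_trans
    (Int.natCast_dvd_natCast.mpr (Finset.gcd_dvd hi)) ?_
  exact addOrderOf_dvd_iff_zsmul_eq_zero.mpr (smul_rowClass_eq_zero d hx i)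

end
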